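/- arXiv:math/0506205 — 4 statements merged into one kernel-verified Lean document; each statement's English description precedes it below -/
import Mathlib

section
/- For every real number x ∈ (0, 1], Kurepa's function satisfies K(x) ≤ (9/5)·x. -/
open MeasureTheory Set

/-- Kurepa's function for real `x`:
`K(x) = ∫₀^∞ e^{-t} (t^x - 1)/(t - 1) dt`. -/
noncomputable def kurepa (x : ℝ) : ℝ :=
  ∫ t in Ioi (0 : ℝ), Real.exp (-t) * ((t ^ x - 1) / (t - 1))

lemma kurepa_aux_nonneg (x t : ℝ) (hx : 0 < x) (ht : 0 < t) :
    0 ≤ Real.exp (-t) * ((t ^ x - 1) / (t - 1)) := by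
  refine mul_nonneg (Real.exp_pos _).le ?_
  rcases le_total t 1 with h | h
  · exact div_nonneg_of_nonpos
      (sub_nonpos.2 (Real.rpow_le_one ht.le h hx.le)) (sub_nonpos.2 h)
  · exact div_nonneg (sub_nonneg.2 (Real.one_le_rpow h hx.le)) (sub_nonneg.2 h)

lemma kurepa_aux_right (x t : ℝ) (hx : 0 < x) (hx1 : x ≤ 1) (ht : 1 < t) :
    Real.exp (-t) * ((t ^ x - 1) / (t - 1)) ≤ x * Real.exp (-t) := by
  have h : (t ^ x - 1) / (t - 1) ≤ x := by
    rw [div_le_iff₀ (by linarith)]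
    have := rpow_one_add_le_one_add_mul_self (s := t - 1) (by linarith) hx.le hx1
    rw [add_sub_cancel] at this
    linarith
  rw [mul_comm x]
  exact mul_le_mul_of_nonneg_left h (Real.exp_pos _).le

lemma kurepa_aux_left (x t : ℝ) (hx : 0 < x) (ht : 0 < t) (ht1 : t ≤ 1) :
    Real.exp (-t) * ((t ^ x - 1) / (t - 1)) ≤ x * (-Real.log t + Real.exp (-1)) := by
  have hl : Real.log t ≤ 0 := Real.log_nonpos ht.le ht1
  rcases ht1.eq_or_lt with rfl | h1
  · simp; positivity
  have e1 : Real.exp (-t) ≤ (1 - t) + Real.exp (-1) * t := by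
    have := convexOn_exp.2 (mem_univ (0:ℝ)) (mem_univ (-1:ℝ)) (sub_nonneg.2 ht1) ht.le (by ring)
    simp only [smul_eq_mul, Real.exp_zero] at this
    calc Real.exp (-t) = Real.exp ((1 - t) * 0 + t * -1) := by ring_nf
      _ ≤ _ := this
      _ = _ := by ring
  have e2 : 1 - t ^ x ≤ x * (-Real.log t) := by
    have := Real.add_one_le_exp (Real.log t * x)
    rw [← Real.rpow_def_of_pos ht] at this
    linarith
  have e3 : t * (-Real.log t) ≤ 1 - t := by
    have := Real.one_sub_inv_le_log_of_pos ht
    have h2 := mul_le_mul_of_nonneg_left this ht.le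
    rw [mul_sub, mul_inv_cancel₀ ht.ne'] at h2
    linarith
  have hd : 0 < 1 - t := by linarith
  have : (t ^ x - 1) / (t - 1) = (1 - t ^ x) / (1 - t) := by
    rw [← neg_div_neg_eq]; simp
  rw [this, ← mul_div_assoc, div_le_iff₀ hd]
  calc Real.exp (-t) * (1 - t ^ x) ≤ Real.exp (-t) * (x * (-Real.log t)) :=
        mul_le_mul_of_nonneg_left e2 (Real.exp_pos _).le
    _ ≤ ((1 - t) + Real.exp (-1) * t) * (x * (-Real.log t)) :=
        mul_le_mul_of_nonneg_right e1 (mul_nonneg hx.le (by linarith))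
    _ = x * (-Real.log t) * (1 - t) + x * Real.exp (-1) * (t * (-Real.log t)) := by ring
    _ ≤ x * (-Real.log t) * (1 - t) + x * Real.exp (-1) * (1 - t) := by
        gcongr
    _ = _ := by ring

/-- For `x ∈ (0,1]`, Kurepa's function satisfies `K(x) ≤ (9/5) x`. -/
theorem kurepa_le_nine_fifths_mul (x : ℝ) (hx : x ∈ Set.Ioc (0 : ℝ) 1) :
    kurepa x ≤ (9 / 5) * x := by
  obtain ⟨hx0, hx1⟩ := hx
  set f : ℝ → ℝ := fun t => Real.exp (-t) * ((t ^ x - 1) / (t - 1)) with hf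
  have i1 : IntervalIntegrable (fun t => x * (-Real.log t + Real.exp (-1))) volume 0 1 :=
    ((intervalIntegral.intervalIntegrable_log'.neg).add intervalIntegrable_const).const_mul x
  have i1' : IntegrableOn (fun t => x * (-Real.log t + Real.exp (-1))) (Ioc 0 1) :=
    (intervalIntegrable_iff_integrableOn_Ioc_of_le zero_le_one).1 i1
  have i2 : IntegrableOn (fun t => x * Real.exp (-t)) (Ioi 1) :=
    (integrableOn_exp_neg_Ioi 1).const_mul x
  have hm : Measurable f := by fun_prop
  have b1 : ∀ t ∈ Ioc (0:ℝ) 1, f t ≤ x * (-Real.log t + Real.exp (-1)) :=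
    fun t ht => kurepa_aux_left x t hx0 ht.1 ht.2
  have b2 : ∀ t ∈ Ioi (1:ℝ), f t ≤ x * Real.exp (-t) :=
    fun t ht => kurepa_aux_right x t hx0 hx1 ht
  have n1 : ∀ t ∈ Ioc (0:ℝ) 1, 0 ≤ f t := fun t ht => kurepa_aux_nonneg x t hx0 ht.1
  have n2 : ∀ t ∈ Ioi (1:ℝ), 0 ≤ f t :=
    fun t ht => kurepa_aux_nonneg x t hx0 (zero_lt_one.trans ht)
  have f1 : IntegrableOn f (Ioc 0 1) := by
    refine Integrable.mono' i1' hm.aestronglyMeasurable ?_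
    refine (ae_restrict_iff' measurableSet_Ioc).2 (.of_forall fun t ht => ?_)
    rw [Real.norm_of_nonneg (n1 t ht)]; exact b1 t ht
  have f2 : IntegrableOn f (Ioi 1) := by
    refine Integrable.mono' i2 hm.aestronglyMeasurable ?_
    refine (ae_restrict_iff' measurableSet_Ioi).2 (.of_forall fun t ht => ?_)
    rw [Real.norm_of_nonneg (n2 t ht)]; exact b2 t ht
  have hk : kurepa x = (∫ t in Ioc 0 1, f t) + ∫ t in Ioi 1, f t := by
    rw [← setIntegral_union (Ioc_disjoint_Ioi le_rfl) measurableSet_Ioi f1 f2,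
      Ioc_union_Ioi_eq_Ioi zero_le_one]
    rfl
  have c1 := setIntegral_mono_on f1 i1' measurableSet_Ioc b1
  have c2 := setIntegral_mono_on f2 i2 measurableSet_Ioi b2
  have v1 : ∫ t in Ioc (0:ℝ) 1, x * (-Real.log t + Real.exp (-1)) = x * (1 + Real.exp (-1)) := by
    rw [← intervalIntegral.integral_of_le zero_le_one, intervalIntegral.integral_const_mul,
      intervalIntegral.integral_add (f := fun t => -Real.log t)
        intervalIntegral.intervalIntegrable_log'.neg intervalIntegrable_const, intervalIntegral.integral_neg, integral_log]
    simp
  have v2 : ∫ t in Ioi (1:ℝ), x * Real.exp (-t) = x * Real.exp (-1) := by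
    rw [integral_const_mul, integral_exp_neg_Ioi]
  have he : Real.exp (-1) ≤ 2 / 5 := by
    have := Real.exp_neg_one_lt_d9
    linarith
  rw [hk]
  nlinarith
end

section
/- For every real number x ≥ 3, Kurepa's function satisfies K(x) ≤ 2·Γ(x) (equivalently, K(x − 1) ≤ Γ(x)), with equality when x = 3, i.e., K(3) = 2·Γ(3). -/
open MeasureTheory Set

theorem kaux_int (x A B C D : ℝ) (hx : 0 < x) :
    IntegrableOn (fun t : ℝ => Real.exp (-t) * (A * t ^ (x - 1) + B * t ^ 2 + C * t + D)) (Ioi 0) ∧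
    ∫ t in Ioi (0 : ℝ), Real.exp (-t) * (A * t ^ (x - 1) + B * t ^ 2 + C * t + D)
      = A * Real.Gamma x + 2 * B + C + D := by
  have key : ∀ s : ℝ, 0 < s → ∀ K : ℝ,
      IntegrableOn (fun t : ℝ => K * (Real.exp (-t) * t ^ (s - 1))) (Ioi 0) ∧
      ∫ t in Ioi (0 : ℝ), K * (Real.exp (-t) * t ^ (s - 1)) = K * Real.Gamma s := by
    intro s hs K
    refine ⟨(Real.GammaIntegral_convergent hs).const_mul K, ?_⟩
    rw [integral_const_mul, Real.Gamma_eq_integral hs]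
  obtain ⟨i1, e1⟩ := key x hx A
  obtain ⟨i2, e2⟩ := key 3 (by norm_num) B
  obtain ⟨i3, e3⟩ := key 2 (by norm_num) C
  obtain ⟨i4, e4⟩ := key 1 (by norm_num) D
  have hf : (fun t : ℝ => Real.exp (-t) * (A * t ^ (x - 1) + B * t ^ 2 + C * t + D)) =
      fun t => ((A * (Real.exp (-t) * t ^ (x - 1)) + B * (Real.exp (-t) * t ^ ((3:ℝ) - 1)))
        + C * (Real.exp (-t) * t ^ ((2:ℝ) - 1))) + D * (Real.exp (-t) * t ^ ((1:ℝ) - 1)) := by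
    funext t
    have h2 : t ^ ((3:ℝ) - 1) = t ^ 2 := by
      rw [show (3:ℝ) - 1 = ((2:ℕ):ℝ) by norm_num, Real.rpow_natCast]
    have h1 : t ^ ((2:ℝ) - 1) = t := by
      rw [show (2:ℝ) - 1 = 1 by norm_num, Real.rpow_one]
    have h0 : t ^ ((1:ℝ) - 1) = 1 := by
      rw [sub_self, Real.rpow_zero]
    rw [h2, h1, h0]; ring
  have g3 : Real.Gamma 3 = 2 := by
    have := Real.Gamma_nat_eq_factorial 2
    norm_num at this; simpa using this
  have i12 := i1.add i2
  have i123 := i12.add i3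
  have i1234 := i123.add i4
  constructor
  · rw [hf]; exact i1234
  · rw [hf]
    refine (integral_add' i123 i4).trans ?_
    rw [integral_add' i12 i3, integral_add' i1 i2, e1, e2, e3, e4,
      g3, Real.Gamma_two, Real.Gamma_one]
    ring

theorem kaux_slope (p t : ℝ) (hp : 1 ≤ p) (ht : 0 < t) (h1 : t ≠ 1) :
    0 ≤ (t - 2) * ((t ^ p - 1) / (t - 1) - (2 ^ p - 1)) := by
  have hc := convexOn_rpow hp
  rcases le_total t 2 with h | h
  · rcases h.eq_or_lt with rfl | h
    · simp
    have := hc.secant_mono (a := 1) (x := t) (y := 2) (by simp) ht.le (by simp) h1 (by norm_num) h.le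
    rw [Real.one_rpow] at this
    norm_num at this
    apply mul_nonneg_of_nonpos_of_nonpos <;> linarith
  · have := hc.secant_mono (a := 1) (x := 2) (y := t) (by simp) (by simp) ht.le (by norm_num) h1 h
    rw [Real.one_rpow] at this
    norm_num at this
    apply mul_nonneg <;> linarith

theorem kaux_nonneg (y t : ℝ) (hy : 0 ≤ y) (ht : 0 < t) : 0 ≤ (t ^ y - 1) / (t - 1) := by
  rcases le_total t 1 with h | h
  · have := Real.rpow_le_one ht.le h hy
    apply div_nonneg_of_nonpos <;> linarith
  · have := Real.one_le_rpow h hy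
    apply div_nonneg <;> linarith

theorem kaux_bound (x t : ℝ) (hx : 3 ≤ x) (ht : 0 < t) :
    (t ^ (x - 1) - 1) / (t - 1) ≤
      1 * t ^ (x - 1) + (-(2 ^ (x - 2) - 1)) * t ^ 2 + (2 * (2 ^ (x - 2) - 1) - 1) * t + 1 := by
  by_cases h1 : t = 1
  · subst h1
    have := Real.one_le_rpow (x := 2) (z := x - 2) (by norm_num) (by linarith)
    simp; linarith
  have h := mul_nonneg ht.le (kaux_slope (x - 2) t (by linarith) ht h1)
  have e : t ^ (x - 1) = t * t ^ (x - 2) := by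
    rw [show x - 1 = 1 + (x - 2) by ring, Real.rpow_add ht, Real.rpow_one]
  have h1' : t - 1 ≠ 0 := sub_ne_zero.mpr h1
  rw [e]
  have id1 : t * t ^ (x - 2) - (t * t ^ (x - 2) - 1) / (t - 1) =
      t * (t - 2) * ((t ^ (x - 2) - 1) / (t - 1)) + (t - 1) := by
    field_simp; ring
  nlinarith [h, id1]

theorem kurepa_le_two_mul_Gamma :
    (∀ x : ℝ, 3 ≤ x → kurepa x ≤ 2 * Real.Gamma x) ∧
    (∀ x : ℝ, 3 ≤ x → kurepa (x - 1) ≤ Real.Gamma x) ∧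
    kurepa 3 = 2 * Real.Gamma 3 := by
  refine ⟨?_, ?_, ?_⟩
  · intro x hx
    obtain ⟨i, e⟩ := kaux_int x 2 (-(2 ^ (x - 2) - 1)) (2 * (2 ^ (x - 2) - 1) - 1) 1 (by linarith)
    have e' : 2 * Real.Gamma x = ∫ t in Ioi (0 : ℝ), Real.exp (-t) * (2 * t ^ (x - 1) +
      (-(2 ^ (x - 2) - 1)) * t ^ 2 + (2 * (2 ^ (x - 2) - 1) - 1) * t + 1) := by
      rw [e]; ring
    rw [e', kurepa]
    refine integral_mono_of_nonneg ?_ i ?_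
    · filter_upwards [ae_restrict_mem measurableSet_Ioi] with t ht
      exact mul_nonneg (Real.exp_pos _).le (kaux_nonneg x t (by linarith) ht)
    · filter_upwards [ae_restrict_mem measurableSet_Ioi] with t ht
      refine mul_le_mul_of_nonneg_left ?_ (Real.exp_pos _).le
      have hb := kaux_bound x t hx ht
      have hp : 0 ≤ t ^ (x - 1) := Real.rpow_nonneg (le_of_lt ht) _
      have : (t ^ x - 1) / (t - 1) ≤ t ^ (x - 1) + (t ^ (x - 1) - 1) / (t - 1) := by
        by_cases h1 : t = 1
        · subst h1; simp
        have h1' : t - 1 ≠ 0 := sub_ne_zero.mpr h1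
        have e : t ^ x = t * t ^ (x - 1) := by
          conv_lhs => rw [show x = 1 + (x - 1) by ring, Real.rpow_add ht, Real.rpow_one]
        rw [e]
        apply le_of_eq
        field_simp; ring
      linarith
  · intro x hx
    obtain ⟨i, e⟩ := kaux_int x 1 (-(2 ^ (x - 2) - 1)) (2 * (2 ^ (x - 2) - 1) - 1) 1 (by linarith)
    have e' : Real.Gamma x = ∫ t in Ioi (0 : ℝ), Real.exp (-t) * (1 * t ^ (x - 1) +
      (-(2 ^ (x - 2) - 1)) * t ^ 2 + (2 * (2 ^ (x - 2) - 1) - 1) * t + 1) := by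
      rw [e]; ring
    rw [e', kurepa]
    refine integral_mono_of_nonneg ?_ i ?_
    · filter_upwards [ae_restrict_mem measurableSet_Ioi] with t ht
      exact mul_nonneg (Real.exp_pos _).le (kaux_nonneg (x - 1) t (by linarith) ht)
    · filter_upwards [ae_restrict_mem measurableSet_Ioi] with t ht
      exact mul_le_mul_of_nonneg_left (kaux_bound x t hx ht) (Real.exp_pos _).le
  · obtain ⟨-, e⟩ := kaux_int 3 0 1 1 1 (by norm_num)
    have g3 : Real.Gamma 3 = 2 := by
      have := Real.Gamma_nat_eq_factorial 2
      norm_num at this; simpa using this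
    have : kurepa 3 = ∫ t in Ioi (0 : ℝ),
        Real.exp (-t) * (0 * t ^ ((3:ℝ) - 1) + 1 * t ^ 2 + 1 * t + 1) := by
      rw [kurepa]
      apply integral_congr_ae
      apply ae_restrict_of_ae
      filter_upwards [compl_mem_ae_iff.mpr (measure_singleton (μ := volume) (1:ℝ))] with t ht
      have h1 : t - 1 ≠ 0 := sub_ne_zero.mpr ht
      have h3 : t ^ (3:ℝ) = t ^ 3 := by
        rw [show (3:ℝ) = ((3:ℕ):ℝ) by norm_num, Real.rpow_natCast]
      simp only [h3]
      congr 1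
      field_simp; ring
    rw [this, e, g3]; norm_num
end

section
/- For every natural number k ≥ 1 and every real number x ≥ k + 2, Kurepa's function satisfies K(x − k)/Γ(x − k + 1) ≤ 1, with equality when x = k + 2. -/
open MeasureTheory Set

lemma kur_sinh (s : ℝ) (h0 : 0 ≤ s) (h1 : s ≤ 1) (u : ℝ) (hu : 0 ≤ u) :
    Real.sinh (s * u) ≤ s * Real.sinh u := by
  have hd : ∀ u : ℝ, HasDerivAt (fun u => s * Real.sinh u - Real.sinh (s * u))
      (s * Real.cosh u - Real.cosh (s * u) * (s * 1)) u := fun u =>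
    ((Real.hasDerivAt_sinh u).const_mul s).sub
      ((Real.hasDerivAt_sinh (s * u)).comp u ((hasDerivAt_id u).const_mul s))
  have hm : MonotoneOn (fun u => s * Real.sinh u - Real.sinh (s * u)) (Ici 0) := by
    apply monotoneOn_of_deriv_nonneg (convex_Ici 0)
    · exact fun x _ => (hd x).continuousAt.continuousWithinAt
    · exact fun x _ => (hd x).differentiableAt.differentiableWithinAt
    · intro x hx
      rw [interior_Ici] at hx
      have hx : 0 < x := hx
      rw [(hd x).deriv]
      have : Real.cosh (s * x) ≤ Real.cosh x := by
        rw [Real.cosh_le_cosh, abs_of_nonneg (by positivity), abs_of_pos hx]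
        nlinarith
      nlinarith
  have := hm (mem_Ici.2 le_rfl) (mem_Ici.2 hu) hu
  simp at this
  linarith

lemma kur_pt (s : ℝ) (h0 : 0 ≤ s) (h1 : s ≤ 1) (t : ℝ) (ht : 0 < t) :
    0 ≤ (t ^ s - 1) / (t - 1) ∧ (t ^ s - 1) / (t - 1) ≤ s * t ^ ((s + 1) / 2 - 1) := by
  obtain ⟨u, rfl⟩ : ∃ u : ℝ, Real.exp (2 * u) = t :=
    ⟨Real.log t / 2, by rw [mul_div_cancel₀ _ two_ne_zero, Real.exp_log ht]⟩
  have e1 : Real.exp (2 * u) ^ s - 1 = Real.exp (s * u) * (2 * Real.sinh (s * u)) := by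
    rw [← Real.exp_mul, Real.sinh_eq, mul_div_cancel₀ _ two_ne_zero, mul_sub, ← Real.exp_add,
      ← Real.exp_add, add_neg_cancel, Real.exp_zero]
    ring_nf
  have e2 : Real.exp (2 * u) - 1 = Real.exp u * (2 * Real.sinh u) := by
    rw [Real.sinh_eq, mul_div_cancel₀ _ two_ne_zero, mul_sub, ← Real.exp_add,
      ← Real.exp_add, add_neg_cancel, Real.exp_zero]
    ring_nf
  have e3 : Real.exp (2 * u) ^ ((s + 1) / 2 - 1) = Real.exp (s * u) / Real.exp u := by
    rw [← Real.exp_mul, ← Real.exp_sub]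
    ring_nf
  have key : 0 ≤ Real.sinh (s * u) / Real.sinh u ∧ Real.sinh (s * u) / Real.sinh u ≤ s := by
    rcases lt_trichotomy u 0 with hu | rfl | hu
    · have a := kur_sinh s h0 h1 (-u) (by linarith)
      have b : 0 < Real.sinh (-u) := Real.sinh_pos_iff.2 (by linarith)
      have c : 0 ≤ Real.sinh (s * -u) := Real.sinh_nonneg_iff.2 (by nlinarith)
      have d : Real.sinh (s * u) / Real.sinh u = Real.sinh (s * -u) / Real.sinh (-u) := by
        rw [mul_neg, Real.sinh_neg, Real.sinh_neg, neg_div_neg_eq]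
      rw [d, div_le_iff₀ b]
      exact ⟨by positivity, a⟩
    · simpa using h0
    · have a := kur_sinh s h0 h1 u hu.le
      have b : 0 < Real.sinh u := Real.sinh_pos_iff.2 hu
      have c : 0 ≤ Real.sinh (s * u) := Real.sinh_nonneg_iff.2 (by positivity)
      rw [div_le_iff₀ b]
      exact ⟨by positivity, a⟩
  have e4 : Real.exp (s * u) * (2 * Real.sinh (s * u)) / (Real.exp u * (2 * Real.sinh u))
      = Real.exp (s * u) / Real.exp u * (Real.sinh (s * u) / Real.sinh u) := by
    rw [mul_div_mul_comm, mul_div_mul_left _ _ two_ne_zero]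
  rw [e1, e2, e3, e4]
  have : 0 < Real.exp (s * u) / Real.exp u := by positivity
  constructor
  · exact mul_nonneg this.le key.1
  · rw [mul_comm s (Real.exp (s * u) / Real.exp u)]
    exact mul_le_mul_of_nonneg_left key.2 this.le

/-- integrability of the Kurepa integrand -/
def KurInt (x : ℝ) : Prop :=
  IntegrableOn (fun t : ℝ => Real.exp (-t) * ((t ^ x - 1) / (t - 1))) (Ioi 0)

lemma kur_base (s : ℝ) (h0 : 0 ≤ s) (h1 : s ≤ 1) :
    KurInt s ∧ kurepa s ≤ s * Real.Gamma ((s + 1) / 2) := by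
  have hG := (Real.GammaIntegral_convergent (s := (s + 1) / 2) (by linarith)).const_mul s
  have hI : KurInt s := by
    refine Integrable.mono' hG ?_ ?_
    · exact Measurable.aestronglyMeasurable (by fun_prop)
    · refine (ae_restrict_iff' measurableSet_Ioi).2 (Filter.Eventually.of_forall fun t ht => ?_)
      have := kur_pt s h0 h1 t ht
      have e := Real.exp_pos (-t)
      rw [Real.norm_of_nonneg (mul_nonneg e.le this.1)]
      nlinarith
  refine ⟨hI, ?_⟩
  rw [Real.Gamma_eq_integral (by linarith), kurepa, ← integral_const_mul]
  refine setIntegral_mono_on hI hG measurableSet_Ioi fun t ht => ?_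
  have := kur_pt s h0 h1 t ht
  have e := Real.exp_pos (-t)
  nlinarith

lemma kur_step (x : ℝ) (h0 : 0 ≤ x) (h : KurInt x) :
    KurInt (x + 1) ∧ kurepa (x + 1) = kurepa x + Real.Gamma (x + 1) := by
  have hG := Real.GammaIntegral_convergent (s := x + 1) (by linarith)
  have hae : (fun t : ℝ => Real.exp (-t) * ((t ^ x - 1) / (t - 1)) +
      Real.exp (-t) * t ^ (x + 1 - 1)) =ᵐ[volume.restrict (Ioi 0)]
      (fun t : ℝ => Real.exp (-t) * ((t ^ (x + 1) - 1) / (t - 1))) := by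
    have h1 : ∀ᵐ t : ℝ ∂(volume.restrict (Ioi (0:ℝ))), t ≠ 1 :=
      ae_restrict_of_ae (Measure.ae_ne volume 1)
    filter_upwards [h1, ae_restrict_mem measurableSet_Ioi] with t ht ht0
    have : t - 1 ≠ 0 := sub_ne_zero.2 ht
    rw [Real.rpow_add_one (ne_of_gt ht0), add_sub_cancel_right]
    field_simp
    ring
  refine ⟨(h.add hG).congr hae, ?_⟩
  rw [Real.Gamma_eq_integral (by linarith), kurepa, kurepa, ← integral_add h hG]
  exact integral_congr_ae hae.symm

lemma kur_23 (s : ℝ) (h0 : 0 ≤ s) (h1 : s ≤ 1) :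
    KurInt (s + 2) ∧ kurepa (s + 2) ≤ Real.Gamma (s + 2 + 1) := by
  obtain ⟨i0, b⟩ := kur_base s h0 h1
  obtain ⟨i1, e1⟩ := kur_step s h0 i0
  obtain ⟨i2, e2⟩ := kur_step (s + 1) (by linarith) i1
  have g1 : Real.Gamma (s + 1 + 1) = (s + 1) * Real.Gamma (s + 1) :=
    Real.Gamma_add_one (by linarith)
  have g2 : Real.Gamma (s + 2 + 1) = (s + 2) * ((s + 1) * Real.Gamma (s + 1)) := by
    rw [Real.Gamma_add_one (by linarith), ← g1]; ring_nf
  have g3 : Real.Gamma ((s + 1) / 2 + 1) = (s + 1) / 2 * Real.Gamma ((s + 1) / 2) :=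
    Real.Gamma_add_one (by linarith)
  have c : Real.Gamma ((s + 1) / 2 + 1) ≤ 1 := by
    have hc := Real.convexOn_Gamma.2
    have := @hc 1 (by simp) 2 (by simp)
      (1 - (s + 1) / 2) ((s + 1) / 2) (by linarith) (by linarith) (by ring)
    simp only [smul_eq_mul, Real.Gamma_one, Real.Gamma_two] at this
    ring_nf at this ⊢
    linarith
  have m : 2 ≤ Real.Gamma (s + 2 + 1) := by
    have := Real.Gamma_strictMonoOn_Ici.monotoneOn (a := 3) (b := s + 2 + 1)
      (by norm_num) (mem_Ici.2 (by linarith)) (by linarith)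
    have h3 : Real.Gamma 3 = 2 := by
      rw [show (3 : ℝ) = 2 + 1 by norm_num, Real.Gamma_add_one two_ne_zero, Real.Gamma_two,
        mul_one]
    linarith
  have e : s + 1 + 1 = s + 2 := by ring
  rw [e] at e2 i2
  rw [e] at g1
  refine ⟨i2, ?_⟩
  have q : Real.Gamma ((s + 1) / 2) ≤ (s + 2) * Real.Gamma (s + 1) := by
    have : (s + 1) * Real.Gamma ((s + 1) / 2) ≤ (s + 1) * ((s + 2) * Real.Gamma (s + 1)) := by
      nlinarith
    exact le_of_mul_le_mul_left this (by linarith)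
  have := mul_le_mul_of_nonneg_left q h0
  rw [e2, e1, g1, g2]
  nlinarith

lemma kur_all (s : ℝ) (h0 : 0 ≤ s) (h1 : s ≤ 1) (n : ℕ) :
    KurInt (s + 2 + n) ∧ kurepa (s + 2 + n) ≤ Real.Gamma (s + 2 + n + 1) := by
  induction n with
  | zero => simpa using kur_23 s h0 h1
  | succ n ih =>
    have hn : (0 : ℝ) ≤ n := Nat.cast_nonneg n
    obtain ⟨i, e⟩ := kur_step (s + 2 + n) (by linarith) ih.1
    push_cast
    rw [← add_assoc]
    refine ⟨i, ?_⟩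
    rw [e, Real.Gamma_add_one (s := s + 2 + n + 1) (by linarith)]
    have := Real.Gamma_pos_of_pos (s := s + 2 + n + 1) (by linarith)
    nlinarith [ih.2]

lemma kur_two : kurepa 2 = 2 := by
  obtain ⟨i0, -⟩ := kur_base 0 le_rfl zero_le_one
  obtain ⟨i1, e1⟩ := kur_step 0 le_rfl i0
  obtain ⟨i2, e2⟩ := kur_step (0 + 1) (by norm_num) i1
  have k0 : kurepa 0 = 0 := by simp [kurepa]
  rw [e1, k0] at e2
  norm_num at e2
  exact e2

/-- For every `k ≥ 1` and `x ≥ k + 2`, `K(x - k)/Γ(x - k + 1) ≤ 1`,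
with equality when `x = k + 2`. -/
theorem kurepa_div_Gamma_le_one (k : ℕ) (hk : 1 ≤ k) :
    (∀ x : ℝ, (k : ℝ) + 2 ≤ x → kurepa (x - k) / Real.Gamma (x - k + 1) ≤ 1) ∧
    kurepa (((k : ℝ) + 2) - k) / Real.Gamma (((k : ℝ) + 2) - k + 1) = 1 := by
  constructor
  · intro x hx
    rw [div_le_one (Real.Gamma_pos_of_pos (by linarith))]
    have hy : 0 ≤ x - k - 2 := by linarith
    have := (kur_all (x - k - 2 - ⌊x - k - 2⌋₊) (by linarith [Nat.floor_le hy])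
      (by linarith [Nat.lt_floor_add_one (x - k - 2)]) ⌊x - k - 2⌋₊).2
    have e : x - k - 2 - ⌊x - k - 2⌋₊ + 2 + ⌊x - k - 2⌋₊ = x - k := by ring
    rwa [e] at this
  · have h3 : Real.Gamma (2 + 1) = 2 := by
      rw [Real.Gamma_add_one two_ne_zero, Real.Gamma_two, mul_one]
    rw [add_sub_cancel_left, kur_two, h3]
    norm_num
end

section
/- Let A_k(x) = R_k(x) and B_k(x) = ((P_{k−1}(x) + 1)/P_{k−1}(x)) · R_k(x), where R_k(x) = Σ_{j=0}^{k−1} Π_{i=0}^{j} 1/(x − i) and P_k(x) = 1 + Σ_{j=0}^{k−1} Π_{i=0}^{j} (x − k + i). Then for every natural number k ≥ 1 and every real number x ≥ k + 3, the chain of inequalities A_k(x) < A_{k+1}(x) < K(x)/Γ(x + 1) ≤ B_{k+1}(x) < B_k(x) holds. -/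
open MeasureTheory Set

/-- The rational function `R k x = ∑_{j=0}^{k-1} ∏_{i=0}^{j} 1/(x-i)`. -/
noncomputable def kurepaR (k : ℕ) (x : ℝ) : ℝ :=
  ∑ j ∈ Finset.range k, ∏ i ∈ Finset.range (j + 1), (1 / (x - (i : ℝ)))

/-- The polynomial `P k x = 1 + ∑_{j=0}^{k-1} ∏_{i=0}^{j} (x - k + i)`. -/
noncomputable def kurepaP (k : ℕ) (x : ℝ) : ℝ :=
  1 + ∑ j ∈ Finset.range k, ∏ i ∈ Finset.range (j + 1), (x - (k : ℝ) + (i : ℝ))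

/-- The lower bound `A_k(x) = R_k(x)`. -/
noncomputable def kurepaA (k : ℕ) (x : ℝ) : ℝ := kurepaR k x

/-- The upper bound `B_k(x) = ((P_{k-1}(x)+1)/P_{k-1}(x)) R_k(x)`. -/
noncomputable def kurepaB (k : ℕ) (x : ℝ) : ℝ :=
  ((kurepaP (k - 1) x + 1) / kurepaP (k - 1) x) * kurepaR k x

lemma aux_slope_nonneg {z t : ℝ} (hz : 1 ≤ z) (ht : 0 < t) : 0 ≤ (t ^ z - 1) / (t - 1) := by
  rcases le_total t 1 with h | h
  · apply div_nonneg_of_nonpos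
    · linarith [Real.rpow_le_one ht.le h (by linarith : 0 ≤ z)]
    · linarith
  · apply div_nonneg
    · linarith [Real.one_le_rpow h (by linarith : 0 ≤ z)]
    · linarith

lemma aux_bern {z t : ℝ} (hz : 1 ≤ z) (ht : 0 < t) : 1 + z * (t - 1) ≤ t ^ z := by
  have := one_add_mul_self_le_rpow_one_add (s := t - 1) (by linarith) hz
  simpa using this

lemma aux_slope_le_one {z t : ℝ} (hz : 1 ≤ z) (ht : 0 < t) (h : t ≤ 1) :
    (t ^ z - 1) / (t - 1) ≤ z := by
  rcases eq_or_lt_of_le h with rfl | h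
  · simp; linarith
  · rw [div_le_iff_of_neg (by linarith)]
    linarith [aux_bern hz ht]

lemma aux_slope_le_pow {z t : ℝ} (hz : 1 ≤ z) (h : 1 < t) :
    (t ^ z - 1) / (t - 1) ≤ z * t ^ (z - 1) := by
  have ht : 0 < t := by linarith
  rw [div_le_iff₀ (by linarith)]
  have h1 := aux_bern hz (inv_pos.2 ht)
  rw [Real.inv_rpow ht.le] at h1
  have hp : 0 < t ^ z := Real.rpow_pos_of_pos ht z
  rw [Real.rpow_sub_one ht.ne']
  have h2 := mul_le_mul_of_nonneg_right h1 hp.le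
  rw [inv_mul_cancel₀ hp.ne'] at h2
  have : z * (t ^ z / t) * (t - 1) = t ^ z - (1 + z * (t⁻¹ - 1)) * t ^ z := by
    field_simp; ring
  linarith

lemma aux_gint {s : ℝ} (hs : 0 ≤ s) :
    IntegrableOn (fun t : ℝ => Real.exp (-t) * t ^ s) (Ioi 0) := by
  have := Real.GammaIntegral_convergent (s := s + 1) (by linarith)
  simpa using this

lemma aux_kint {z : ℝ} (hz : 1 ≤ z) :
    IntegrableOn (fun t : ℝ => Real.exp (-t) * ((t ^ z - 1) / (t - 1))) (Ioi 0) := by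
  have h0 := (aux_gint (le_refl 0)).const_mul z
  have h1 := (aux_gint (s := z - 1) (by linarith)).const_mul z
  refine Integrable.mono' (h0.add h1) ?_ ?_
  · apply Measurable.aestronglyMeasurable
    fun_prop
  · refine (ae_restrict_iff' measurableSet_Ioi).2 (Filter.Eventually.of_forall fun t ht => ?_)
    have ht : 0 < t := ht
    have he := Real.exp_pos (-t)
    have hn := aux_slope_nonneg hz ht
    rw [Real.norm_of_nonneg (by positivity)]
    have hp : 0 ≤ t ^ (z - 1) := (Real.rpow_pos_of_pos ht _).le
    have : (t ^ z - 1) / (t - 1) ≤ z + z * t ^ (z - 1) := by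
      have : 0 ≤ z * t ^ (z - 1) := by positivity
      rcases le_or_gt t 1 with h | h
      · linarith [aux_slope_le_one hz ht h]
      · linarith [aux_slope_le_pow hz h]
    have := mul_le_mul_of_nonneg_left this he.le
    simp only [Pi.add_apply, Real.rpow_zero]
    linarith

lemma kurepa_nonneg {z : ℝ} (hz : 1 ≤ z) : 0 ≤ kurepa z :=
  setIntegral_nonneg measurableSet_Ioi fun _ ht =>
    mul_nonneg (Real.exp_pos _).le (aux_slope_nonneg hz ht)

lemma kurepa_rec {y : ℝ} (hy : 2 ≤ y) : kurepa y = Real.Gamma y + kurepa (y - 1) := by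
  have hg : Real.Gamma y = ∫ t in Ioi (0:ℝ), Real.exp (-t) * t ^ (y - 1) :=
    Real.Gamma_eq_integral (by linarith)
  rw [hg, kurepa, kurepa, ← integral_add (aux_gint (by linarith)) (aux_kint (by linarith))]
  apply integral_congr_ae
  refine (ae_restrict_iff' measurableSet_Ioi).2 ?_
  have : ∀ᵐ t : ℝ, t ≠ 1 := by simp [ae_iff]
  filter_upwards [this] with t h1 ht
  have ht : 0 < t := ht
  have : t - 1 ≠ 0 := sub_ne_zero.2 h1
  rw [Real.rpow_sub_one ht.ne']
  field_simp
  ring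

lemma kurepa_le_aux {z : ℝ} (hz : 1 ≤ z) : kurepa z ≤ z * Real.Gamma (z + 1) := by
  have hg : Real.Gamma (z + 1) = ∫ t in Ioi (0:ℝ), Real.exp (-t) * t ^ z := by
    rw [Real.Gamma_eq_integral (by linarith)]; simp
  rw [hg, kurepa, ← integral_const_mul]
  have hk := aux_kint hz
  have hi : IntegrableOn (fun t : ℝ => z * (Real.exp (-t) * t ^ z)) (Ioi 0) := (aux_gint (s := z) (by linarith)).const_mul z
  have hi1 := (aux_gint (s := z - 1) (by linarith)).const_mul (z ^ 2)
  have hi0 := (aux_gint (s := 0) (by linarith)).const_mul (z ^ 2 - z)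
  have hU : Ioi (0:ℝ) = Ioc 0 1 ∪ Ioi 1 := (Ioc_union_Ioi_eq_Ioi zero_le_one).symm
  have hs1 : Ioc (0:ℝ) 1 ⊆ Ioi 0 := Ioc_subset_Ioi_self
  have hs2 : Ioi (1:ℝ) ⊆ Ioi 0 := Ioi_subset_Ioi zero_le_one
  rw [hU, setIntegral_union Ioc_disjoint_Ioi_same measurableSet_Ioi (hk.mono_set hs1)
    (hk.mono_set hs2), setIntegral_union Ioc_disjoint_Ioi_same measurableSet_Ioi
    (hi.mono_set hs1) (hi.mono_set hs2)]
  -- first part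
  have hc : IntegrableOn (fun t : ℝ => Real.exp (-t) * (z ^ 2 * (t - 1))) (Ioc 0 1) := by
    apply (Continuous.integrableOn_Icc (by fun_prop)).mono_set Ioc_subset_Icc_self
  have e1 : ∫ t in Ioc (0:ℝ) 1, Real.exp (-t) * (z ^ 2 * (t - 1)) = - (z ^ 2 * Real.exp (-1)) := by
    rw [← intervalIntegral.integral_of_le zero_le_one]
    rw [intervalIntegral.integral_eq_sub_of_hasDerivAt
      (f := fun t => - (Real.exp (-t) * (z ^ 2 * t)))]
    · simp; ring
    · intro t _
      have := (((hasDerivAt_neg t).exp).mul ((hasDerivAt_id t).const_mul (z ^ 2))).neg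
      refine HasDerivAt.congr_deriv (f := fun t => _) this ?_
      simp only [id]; ring
    · exact (by fun_prop : Continuous _).intervalIntegrable _ _
  have b1 : ∫ t in Ioc (0:ℝ) 1, (Real.exp (-t) * ((t ^ z - 1) / (t - 1))
      + Real.exp (-t) * (z ^ 2 * (t - 1))) ≤ ∫ t in Ioc (0:ℝ) 1, z * (Real.exp (-t) * t ^ z) := by
    refine setIntegral_mono_on ((hk.mono_set hs1).add hc) (hi.mono_set hs1) measurableSet_Ioc ?_
    intro t ht
    have he := Real.exp_pos (-t)
    have h1 := aux_slope_le_one hz ht.1 ht.2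
    have h2 := mul_le_mul_of_nonneg_left (aux_bern hz ht.1) (by linarith : 0 ≤ z)
    have : (t ^ z - 1) / (t - 1) + z ^ 2 * (t - 1) ≤ z * t ^ z := by linarith
    have := mul_le_mul_of_nonneg_left this he.le
    linarith
  rw [integral_add (hk.mono_set hs1) hc, e1] at b1
  -- second part
  have hd : IntegrableOn (fun t : ℝ => Real.exp (-t) * (z * t ^ z - z ^ 2 * t ^ (z - 1)
      + (z ^ 2 - z))) (Ioi 0) := by
    refine ((hi.sub hi1).add hi0).congr (Filter.Eventually.of_forall fun t => ?_)
    simp; ring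
  have hlim (s : ℝ) : Filter.Tendsto (fun t : ℝ => Real.exp (-t) * t ^ s) Filter.atTop (nhds 0) := by
    have := tendsto_rpow_mul_exp_neg_mul_atTop_nhds_zero s 1 one_pos
    refine this.congr fun t => ?_
    simp [mul_comm]
  have e2 : ∫ t in Ioi (1:ℝ), Real.exp (-t) * (z * t ^ z - z ^ 2 * t ^ (z - 1)
      + (z ^ 2 - z)) = z ^ 2 * Real.exp (-1) := by
    rw [integral_Ioi_of_hasDerivAt_of_tendsto'
      (f := fun t => - (Real.exp (-t) * (z * t ^ z + (z ^ 2 - z)))) (m := 0) ?_ (hd.mono_set hs2) ?_]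
    · simp; ring
    · intro t ht
      have ht : 0 < t := lt_of_lt_of_le one_pos ht
      have := (((hasDerivAt_neg t).exp).mul (((Real.hasDerivAt_rpow_const (p := z)
        (Or.inl ht.ne')).const_mul z).add_const (z ^ 2 - z))).neg
      refine HasDerivAt.congr_deriv (f := fun t => _) this ?_
      ring
    · have := (((hlim z).const_mul z).add ((hlim 0).const_mul (z ^ 2 - z))).neg
      simp only [mul_zero, add_zero, neg_zero] at this
      refine this.congr fun t => ?_
      simp; ring
  have b2 : ∫ t in Ioi (1:ℝ), (Real.exp (-t) * ((t ^ z - 1) / (t - 1))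
      + Real.exp (-t) * (z * t ^ z - z ^ 2 * t ^ (z - 1) + (z ^ 2 - z)))
        ≤ ∫ t in Ioi (1:ℝ), z * (Real.exp (-t) * t ^ z) := by
    refine setIntegral_mono_on ((hk.mono_set hs2).add (hd.mono_set hs2)) (hi.mono_set hs2)
      measurableSet_Ioi ?_
    intro t ht
    have ht : 1 < t := ht
    have he := Real.exp_pos (-t)
    have h1 := aux_slope_le_pow hz ht
    have h2 : 1 ≤ t ^ (z - 1) := Real.one_le_rpow ht.le (by linarith)
    have h3 : 0 ≤ (z ^ 2 - z) * (t ^ (z - 1) - 1) :=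
      mul_nonneg (by nlinarith) (by linarith)
    have : (t ^ z - 1) / (t - 1) + (z * t ^ z - z ^ 2 * t ^ (z - 1) + (z ^ 2 - z)) ≤ z * t ^ z := by
      linarith
    have := mul_le_mul_of_nonneg_left this he.le
    linarith
  rw [integral_add (hk.mono_set hs2) (hd.mono_set hs2), e2] at b2
  linarith

lemma kurepa_le_Gamma {y : ℝ} (hy : 2 ≤ y) : kurepa y ≤ Real.Gamma (y + 1) := by
  have h := kurepa_le_aux (z := y - 1) (by linarith)
  rw [kurepa_rec hy, Real.Gamma_add_one (by linarith)]
  rw [sub_add_cancel] at h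
  linarith

lemma kurepa_pos {y : ℝ} (hy : 2 ≤ y) : 0 < kurepa y := by
  rw [kurepa_rec hy]
  linarith [kurepa_nonneg (z := y - 1) (by linarith), Real.Gamma_pos_of_pos (by linarith : 0 < y)]

noncomputable def kurQ (n : ℕ) (x : ℝ) : ℝ := ∏ i ∈ Finset.range n, (1 / (x - (i : ℝ)))

lemma kurQ_succ (n : ℕ) (x : ℝ) : kurQ (n + 1) x = kurQ n x * (1 / (x - n)) :=
  Finset.prod_range_succ _ _

lemma kurepaR_succ (n : ℕ) (x : ℝ) : kurepaR (n + 1) x = kurepaR n x + kurQ (n + 1) x :=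
  Finset.sum_range_succ _ _

lemma kurQ_pos (n : ℕ) (x : ℝ) (h : (n : ℝ) < x) : 0 < kurQ n x := by
  refine Finset.prod_pos fun i hi => ?_
  have : (i : ℝ) < n := by exact_mod_cast Finset.mem_range.1 hi
  exact one_div_pos.2 (by linarith)

lemma kurepaP_succ (n : ℕ) (x : ℝ) : kurepaP (n + 1) x = 1 + (x - (n + 1)) * kurepaP n x := by
  unfold kurepaP
  congr 1
  rw [Finset.sum_range_succ', mul_add, Finset.mul_sum, add_comm]
  congr 1
  · simp
  · refine Finset.sum_congr rfl fun j _ => ?_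
    rw [Finset.prod_range_succ', mul_comm]
    congr 1
    · simp
    · refine Finset.prod_congr rfl fun i _ => ?_
      push_cast; ring

lemma kurepaP_pos (n : ℕ) (x : ℝ) (h : (n : ℝ) < x) : 0 < kurepaP n x := by
  induction n with
  | zero => simp [kurepaP]
  | succ n ih =>
    push_cast at h
    rw [kurepaP_succ]
    have := mul_pos (by linarith : 0 < x - (n + 1)) (ih (by linarith))
    linarith

lemma kurepaR_eq (n : ℕ) (x : ℝ) (h : (n : ℝ) < x) :
    kurepaR (n + 1) x = kurepaP n x * kurQ (n + 1) x := by
  induction n with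
  | zero => simp [kurepaP, kurepaR, kurQ]
  | succ n ih =>
    push_cast at h
    rw [kurepaR_succ, ih (by linarith), kurepaP_succ, kurQ_succ (n + 1)]
    have : x - (n + 1) ≠ 0 := by linarith
    push_cast
    field_simp
    ring

lemma kurepaB_eq (n : ℕ) (x : ℝ) (h : (n : ℝ) < x) :
    kurepaB (n + 1) x = kurepaR (n + 1) x + kurQ (n + 1) x := by
  have hp := kurepaP_pos n x h
  rw [kurepaB, Nat.add_sub_cancel, kurepaR_eq n x h]
  field_simp

lemma kurepa_expand (n : ℕ) (x : ℝ) (h : (n : ℝ) + 1 ≤ x) :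
    kurepa x / Real.Gamma (x + 1) =
      kurepaR n x + kurQ n x * (kurepa (x - n) / Real.Gamma (x - n + 1)) := by
  induction n with
  | zero => simp [kurepaR, kurQ]
  | succ n ih =>
    push_cast at h
    have hy : 2 ≤ x - n := by linarith
    have h0 : x - n ≠ 0 := by linarith
    have hG := Real.Gamma_pos_of_pos (by linarith : 0 < x - n)
    rw [ih (by linarith), kurepaR_succ, kurQ_succ, kurepa_rec hy, Real.Gamma_add_one h0]
    push_cast
    rw [show x - (n + 1) = x - n - 1 by ring, sub_add_cancel]
    field_simp
    ring

/-- For `k ≥ 1` and `x ≥ k + 3`,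
`A_k(x) < A_{k+1}(x) < K(x)/Γ(x+1) ≤ B_{k+1}(x) < B_k(x)`. -/
theorem kurepa_bounds_monotone (k : ℕ) (hk : 1 ≤ k) (x : ℝ)
    (hx : (k : ℝ) + 3 ≤ x) :
    kurepaA k x < kurepaA (k + 1) x ∧
    kurepaA (k + 1) x < kurepa x / Real.Gamma (x + 1) ∧
    kurepa x / Real.Gamma (x + 1) ≤ kurepaB (k + 1) x ∧
    kurepaB (k + 1) x < kurepaB k x := by
  have hQ := kurQ_pos k x (by linarith)
  have hQ1 := kurQ_pos (k + 1) x (by push_cast; linarith)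
  have hy : 2 ≤ x - ((k + 1 : ℕ) : ℝ) := by push_cast; linarith
  have hG := Real.Gamma_pos_of_pos (by linarith : 0 < x - ((k + 1 : ℕ) : ℝ) + 1)
  rw [kurepa_expand (k + 1) x (by push_cast; linarith), kurepaB_eq k x (by linarith)]
  unfold kurepaA
  refine ⟨?_, ?_, ?_, ?_⟩
  · rw [kurepaR_succ]; linarith
  · have := mul_pos hQ1 (div_pos (kurepa_pos hy) hG)
    linarith
  · have := mul_le_mul_of_nonneg_left ((div_le_one hG).2 (kurepa_le_Gamma hy)) hQ1.le
    linarith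
  · obtain ⟨m, rfl⟩ : ∃ m, k = m + 1 := ⟨k - 1, by omega⟩
    rw [kurepaB_eq m x (by push_cast at hx; linarith), kurepaR_succ (m + 1)]
    have h3 : kurQ (m + 1 + 1) x ≤ kurQ (m + 1) x * (1 / 3) := by
      rw [kurQ_succ (m + 1)]
      refine mul_le_mul_of_nonneg_left ?_ hQ.le
      exact one_div_le_one_div_of_le (by norm_num) (by linarith)
    linarith
end
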